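/- Assume 𝕋 is bounded and let S be the self-adjoint operator with separated boundary conditions as above. Then every eigenvalue of S is simple: for every λ ∈ ℝ, the eigenspace {f ∈ dom S : Sf = λ·f} has dimension at most one. -/

import Mathlib

open MeasureTheory Set Filter
open scoped ENNReal NNReal Classical

/-- Forward shift of a time scale. -/
noncomputable def tsSigma (T : Set ℝ) (t : ℝ) : ℝ :=
  if ({s | s ∈ T ∧ t < s}).Nonempty then sInf {s | s ∈ T ∧ t < s} else sSup T

/-- Backward shift of a time scale. -/
noncomputable def tsRho (T : Set ℝ) (t : ℝ) : ℝ :=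
  if ({s | s ∈ T ∧ s < t}).Nonempty then sSup {s | s ∈ T ∧ s < t} else sInf T

/-- `𝕋_κ` : the time scale with the left endpoint removed if it is finite and right-scattered. -/
noncomputable def tsKappa (T : Set ℝ) : Set ℝ :=
  if BddBelow T ∧ sInf T < tsSigma T (sInf T) then T \ {sInf T} else T

/-- Extension `p̄` of a function on `𝕋_κ` to all of `ℝ`. -/
noncomputable def extK (T : Set ℝ) (p : ℝ → ℂ) (t : ℝ) : ℂ :=
  if t ∈ tsKappa T then p t else p (tsSigma (tsKappa T) t)

/-- Coercion of a real-valued coefficient to a complex-valued one. -/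
def cR (f : ℝ → ℝ) : ℝ → ℂ := fun t => (f t : ℂ)

/-- `(u, u^[1])` is an integrated pair with density `h` against the measure `μ = dσ_κ`. -/
def IsPair (T : Set ℝ) (μ : Measure ℝ) (p : ℝ → ℂ) (u u1 h : ℝ → ℂ) : Prop :=
  ∀ c x : ℝ, c ≤ x →
    u x = u c + ∫ t in c..x, u1 t / extK T p t ∧
    u1 x = u1 c + ∫ t in Set.Ioc c x, h t ∂μ

/-- `(u, u^[1])` is a solution pair of `(ℓ - z) u = g`. -/
def IsSLSol (T : Set ℝ) (μ : Measure ℝ) (p r q : ℝ → ℂ) (z : ℂ) (g : ℝ → ℂ)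
    (u u1 : ℝ → ℂ) : Prop :=
  IsPair T μ p u u1 (fun t => (q t - z * r t) * u t - r t * g t)

/-- Wronskian of two pairs. -/
def Wr (u u1 v v1 : ℝ → ℂ) (x : ℝ) : ℂ := u x * v1 x - u1 x * v x

/-- The integrand `|u|² r` as an `ℝ≥0∞`-valued function. -/
noncomputable def sqWeight (r : ℝ → ℝ) (u : ℝ → ℂ) (t : ℝ) : ℝ≥0∞ :=
  ((‖u t‖₊ : ℝ≥0∞)) ^ 2 * ENNReal.ofReal (r t)

/-- `u` lies in `L²` near the left endpoint `a`. -/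
def L2NearLeft (T : Set ℝ) (μ : Measure ℝ) (r : ℝ → ℝ) (u : ℝ → ℂ) : Prop :=
  ∀ c ∈ tsKappa T, ∫⁻ t in {t | (∃ s ∈ T, s < t) ∧ t ≤ c} ∩ tsKappa T, sqWeight r u t ∂μ < ∞

/-- `u` lies in `L²` near the right endpoint `b`. -/
def L2NearRight (T : Set ℝ) (μ : Measure ℝ) (r : ℝ → ℝ) (u : ℝ → ℂ) : Prop :=
  ∀ c ∈ tsKappa T, ∫⁻ t in {t | c ≤ t ∧ ∃ s ∈ T, t < s} ∩ tsKappa T, sqWeight r u t ∂μ < ∞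

/-- `ℓ` is in the limit-circle case at the left endpoint. -/
def LimitCircleLeft (T : Set ℝ) (μ : Measure ℝ) (p r q : ℝ → ℝ) : Prop :=
  ∀ z : ℂ, ∀ u u1 : ℝ → ℂ, IsSLSol T μ (cR p) (cR r) (cR q) z 0 u u1 → L2NearLeft T μ r u

/-- `ℓ` is in the limit-point case at the left endpoint. -/
def LimitPointLeft (T : Set ℝ) (μ : Measure ℝ) (p r q : ℝ → ℝ) : Prop :=
  ∀ z : ℂ, ∃ u u1 : ℝ → ℂ, IsSLSol T μ (cR p) (cR r) (cR q) z 0 u u1 ∧ ¬ L2NearLeft T μ r u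

/-- `ℓ` is in the limit-circle case at the right endpoint. -/
def LimitCircleRight (T : Set ℝ) (μ : Measure ℝ) (p r q : ℝ → ℝ) : Prop :=
  ∀ z : ℂ, ∀ u u1 : ℝ → ℂ, IsSLSol T μ (cR p) (cR r) (cR q) z 0 u u1 → L2NearRight T μ r u

/-- `ℓ` is in the limit-point case at the right endpoint. -/
def LimitPointRight (T : Set ℝ) (μ : Measure ℝ) (p r q : ℝ → ℝ) : Prop :=
  ∀ z : ℂ, ∃ u u1 : ℝ → ℂ, IsSLSol T μ (cR p) (cR r) (cR q) z 0 u u1 ∧ ¬ L2NearRight T μ r u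

/-- The action `ℓ u = (-h + q u)/r` of the differential expression on a pair with density `h`. -/
noncomputable def ellApply (r q : ℝ → ℝ) (h u : ℝ → ℂ) (t : ℝ) : ℂ :=
  (-h t + (q t : ℂ) * u t) / (r t : ℂ)

/-- Membership in `L²(𝕋_κ; r dσ_κ)`. -/
def MemL2T (T : Set ℝ) (μ : Measure ℝ) (r : ℝ → ℝ) (u : ℝ → ℂ) : Prop :=
  ∫⁻ t in tsKappa T, sqWeight r u t ∂μ < ∞

/-- The pair `(u, u^[1])` with density `h` belongs to `D_ℓ²`. -/
def MemD2 (T : Set ℝ) (μ : Measure ℝ) (p r q : ℝ → ℝ) (u u1 h : ℝ → ℂ) : Prop :=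
  LocallyIntegrable h μ ∧ IsPair T μ (cR p) u u1 h ∧ MemL2T T μ r u ∧
    MemL2T T μ r (ellApply r q h u)

/-- The filter `x ↓ a`, `x ∈ 𝕋`. -/
noncomputable def leftLimFilter (T : Set ℝ) : Filter ℝ :=
  if BddBelow T then nhdsWithin (sInf T) T else Filter.atBot ⊓ Filter.principal T

/-- The filter `x ↑ b`, `x ∈ 𝕋`. -/
noncomputable def rightLimFilter (T : Set ℝ) : Filter ℝ :=
  if BddAbove T then nhdsWithin (sSup T) T else Filter.atTop ⊓ Filter.principal T

/-- The measure `r dσ_κ` on `𝕋_κ`, giving the Hilbert space `L²(𝕋_κ; r dσ_κ)`. -/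
noncomputable def wM (T : Set ℝ) (μ : Measure ℝ) (r : ℝ → ℝ) : Measure ℝ :=
  (μ.restrict (tsKappa T)).withDensity fun t => ENNReal.ofReal (r t)

/-!
Both eigenfunctions satisfy the left boundary condition, so their Wronskian vanishes at `σ(a)` and
some nontrivial linear combination `w` of them has `w(σ(a)) = w^[1](σ(a)) = 0`. Since `w` solves
`ℓ w = z w`, a Grönwall-type argument forces `w = 0` on `[σ(a), ∞) ⊇ 𝕋_κ`.

The argument needs `1 / p̄` to be locally Lebesgue integrable, whereas `1 / p` is integrable with
respect to `dρ`: indeed `dρ` is the push-forward of Lebesgue measure under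
`t ↦ inf (𝕋 ∩ [t, ∞))`, and composing `p` with this map gives `p̄`.
-/

theorem eqOn_zero_of_norm_sub_le_mul_sub {E : Type*} [NormedAddCommGroup E] {w : ℝ → E}
    {G : ℝ → ℝ} {a b : ℝ} (hw : ContinuousOn w (Icc a b)) (hG : ContinuousOn G (Icc a b))
    (ha : w a = 0)
    (h : ∀ c ∈ Icc a b, ∀ x ∈ Icc c b, ∀ M, (∀ t ∈ Icc a x, ‖w t‖ ≤ M) →
      ‖w x - w c‖ ≤ M * (G x - G c)) :
    EqOn w 0 (Icc a b) := by
  refine IsClosed.Icc_subset_of_forall_mem_nhdsGT_of_Icc_subset (s := {x | w x = 0}) ?_ ha ?_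
  · rw [inter_comm]
    exact hw.preimage_isClosed_of_isClosed isClosed_Icc isClosed_singleton
  intro c hc hzero
  have hGc : Tendsto G (nhdsWithin c (Ioi c)) (nhds (G c)) :=
    (hG c ⟨hc.1, hc.2.le⟩).mono_left
      (nhdsWithin_le_of_mem (mem_of_superset (Ioc_mem_nhdsGT hc.2)
        (Ioc_subset_Icc_self.trans (Icc_subset_Icc_left hc.1))))
  have hsmall : ∀ᶠ x in nhdsWithin c (Ioi c), G x < G c + 1 / 2 ∧ x ≤ b :=
    (hGc.eventually_lt_const (by linarith)).and
      (mem_of_superset (Ioc_mem_nhdsGT hc.2) fun _ hx => hx.2)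
  obtain ⟨d, hcd, hd⟩ := mem_nhdsGT_iff_exists_Ioc_subset.1 hsmall
  have hdb : d ≤ b := (hd (right_mem_Ioc.2 hcd)).2
  have hcd' : c < d := hcd
  refine mem_of_superset (Ioc_mem_nhdsGT hcd') fun x hx => ?_
  -- The maximum of `‖w‖` on `[a, d]` is at most half of itself.
  obtain ⟨y, hy, hmax⟩ := isCompact_Icc.exists_isMaxOn (nonempty_Icc.2 (hc.1.trans hcd'.le))
    (hw.mono (Icc_subset_Icc_right hdb)).norm
  have hy0 : ‖w y‖ ≤ 0 := by
    rcases le_or_gt y c with hyc | hcy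
    · rw [hzero ⟨hy.1, hyc⟩, norm_zero]
    · have hbound := h c ⟨hc.1, hc.2.le⟩ y ⟨hcy.le, hy.2.trans hdb⟩ ‖w y‖
        fun t ht => hmax ⟨ht.1, ht.2.trans hy.2⟩
      rw [hzero ⟨hc.1, le_rfl⟩, sub_zero] at hbound
      have hGy : G y < G c + 1 / 2 := (hd ⟨hcy, hy.2⟩).1
      nlinarith [norm_nonneg (w y)]
  exact norm_le_zero_iff.1 ((hmax ⟨hc.1.trans hx.1.le, hx.2⟩).trans hy0)

theorem stronglyMeasurable_setIntegral_Ioc {E : Type*} [NormedAddCommGroup E] [NormedSpace ℝ E]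
    {μ : Measure ℝ} [SFinite μ] {h : ℝ → E} (hh : AEStronglyMeasurable h μ) (a : ℝ) :
    StronglyMeasurable fun x => ∫ t in Ioc a x, h t ∂μ := by
  have hset : MeasurableSet {z : ℝ × ℝ | z.2 ∈ Ioc a z.1} :=
    (measurableSet_lt measurable_const measurable_snd).inter
      (measurableSet_le measurable_snd measurable_fst)
  have hmk : ∀ x, ∫ t in Ioc a x, h t ∂μ = ∫ t, (Ioc a x).indicator (hh.mk h) t ∂μ := fun x => by
    rw [integral_indicator measurableSet_Ioc]
    exact integral_congr_ae (ae_restrict_of_ae hh.ae_eq_mk)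
  simp_rw [hmk]
  exact ((hh.stronglyMeasurable_mk.comp_measurable measurable_snd).indicator hset
    ).integral_prod_right'

theorem integrableOn_Ioc_of_locallyIntegrable {E : Type*} [NormedAddCommGroup E]
    {μ : Measure ℝ} {f : ℝ → E} (hf : LocallyIntegrable f μ) (a b : ℝ) :
    IntegrableOn f (Ioc a b) μ :=
  (hf.integrableOn_isCompact isCompact_Icc).mono_set Ioc_subset_Icc_self

theorem intervalIntegrable_of_locallyIntegrable {E : Type*} [NormedAddCommGroup E]
    {μ : Measure ℝ} {f : ℝ → E} (hf : LocallyIntegrable f μ) (a b : ℝ) :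
    IntervalIntegrable f μ a b :=
  ⟨integrableOn_Ioc_of_locallyIntegrable hf a b, integrableOn_Ioc_of_locallyIntegrable hf b a⟩

section Solutions

variable {T : Set ℝ} {μ : Measure ℝ} {p k u u1 h v v1 g : ℝ → ℂ} {a b c x : ℝ}

namespace IsPair

theorem const_mul (hu : IsPair T μ p u u1 h) (s : ℂ) :
    IsPair T μ p (fun t => s * u t) (fun t => s * u1 t) (fun t => s * h t) := by
  intro c x hcx
  simp only [mul_div_assoc, intervalIntegral.integral_const_mul, integral_const_mul,
    (hu c x hcx).1, (hu c x hcx).2, mul_add, and_self]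

theorem norm_snd_le (hu : IsPair T μ p u u1 h) (hh : LocallyIntegrable h μ)
    (hx : x ∈ Icc a b) : ‖u1 x‖ ≤ ‖u1 a‖ + ∫ t in Ioc a b, ‖h t‖ ∂μ := by
  rw [(hu a x hx.1).2]
  refine (norm_add_le _ _).trans (add_le_add_right ((norm_integral_le_integral_norm _).trans ?_) _)
  exact setIntegral_mono_set
    (integrableOn_Ioc_of_locallyIntegrable hh a b).norm
    (ae_of_all _ fun _ => norm_nonneg _) (Ioc_subset_Ioc_right hx.2).eventuallyLE

theorem intervalIntegrable_div [SFinite μ] (hp : LocallyIntegrable (fun t => 1 / extK T p t))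
    (hh : LocallyIntegrable h μ) (hu : IsPair T μ p u u1 h) (a b : ℝ) :
    IntervalIntegrable (fun t => u1 t / extK T p t) volume a b := by
  wlog hab : a ≤ b
  · exact (this hp hh hu b a (le_of_not_ge hab)).symm
  have hmeas : AEStronglyMeasurable u1 (volume.restrict (Ioc a b)) := by
    refine ((stronglyMeasurable_const (b := u1 a)).add
      (stronglyMeasurable_setIntegral_Ioc hh.aestronglyMeasurable a)).aestronglyMeasurable.congr ?_
    filter_upwards [ae_restrict_mem measurableSet_Ioc] with x hx
    exact (hu a x hx.1.le).2.symm
  rw [intervalIntegrable_iff_integrableOn_Ioc_of_le hab]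
  simp_rw [div_eq_mul_one_div (u1 _)]
  refine Integrable.bdd_mul (c := ‖u1 a‖ + ∫ t in Ioc a b, ‖h t‖ ∂μ)
    (integrableOn_Ioc_of_locallyIntegrable hp a b) hmeas ?_
  filter_upwards [ae_restrict_mem measurableSet_Ioc] with x hx
  exact hu.norm_snd_le hh (Ioc_subset_Icc_self hx)

theorem add [SFinite μ] (hp : LocallyIntegrable (fun t => 1 / extK T p t))
    (hh : LocallyIntegrable h μ) (hg : LocallyIntegrable g μ)
    (hu : IsPair T μ p u u1 h) (hv : IsPair T μ p v v1 g) :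
    IsPair T μ p (fun t => u t + v t) (fun t => u1 t + v1 t) (fun t => h t + g t) := by
  intro c x hcx
  simp only [add_div]
  rw [intervalIntegral.integral_add (hu.intervalIntegrable_div hp hh c x)
    (hv.intervalIntegrable_div hp hg c x), integral_add
    (integrableOn_Ioc_of_locallyIntegrable hh c x) (integrableOn_Ioc_of_locallyIntegrable hg c x),
    (hu c x hcx).1, (hv c x hcx).1, (hu c x hcx).2, (hv c x hcx).2]
  constructor <;> ring

theorem continuousOn_fst [SFinite μ] (hp : LocallyIntegrable (fun t => 1 / extK T p t))
    (hh : LocallyIntegrable h μ) (hu : IsPair T μ p u u1 h) (a : ℝ) :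
    ContinuousOn u (Ici a) :=
  ((intervalIntegral.continuous_primitive (hu.intervalIntegrable_div hp hh) a).const_add
    (u a)).continuousOn.congr fun x hx => (hu a x hx).1

theorem norm_snd_le_mul_of_norm_fst_le {M : ℝ} (hu : IsPair T μ p u u1 h)
    (hk : LocallyIntegrable k μ) (huk : h =ᵐ[μ] fun t => k t * u t) (hu1 : u1 a = 0)
    (hM : ∀ t ∈ Icc a b, ‖u t‖ ≤ M) (hx : x ∈ Icc a b) :
    ‖u1 x‖ ≤ M * ∫ t in Ioc a b, ‖k t‖ ∂μ := by
  have hk' : IntegrableOn (fun t => M * ‖k t‖) (Ioc a b) μ :=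
    (integrableOn_Ioc_of_locallyIntegrable hk a b).norm.const_mul M
  have hM0 : 0 ≤ M := (norm_nonneg _).trans (hM x hx)
  rw [(hu a x hx.1).2, hu1, zero_add, ← integral_const_mul]
  calc ‖∫ t in Ioc a x, h t ∂μ‖
      ≤ ∫ t in Ioc a x, M * ‖k t‖ ∂μ := by
        refine norm_integral_le_of_norm_le (hk'.mono_set (Ioc_subset_Ioc_right hx.2)) ?_
        filter_upwards [ae_restrict_of_ae huk, ae_restrict_mem measurableSet_Ioc] with t ht htx
        rw [ht, norm_mul, mul_comm]
        exact mul_le_mul_of_nonneg_right (hM t ⟨htx.1.le, htx.2.trans hx.2⟩) (norm_nonneg _)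
    _ ≤ ∫ t in Ioc a b, M * ‖k t‖ ∂μ :=
        setIntegral_mono_set hk' (ae_of_all _ fun _ => mul_nonneg hM0 (norm_nonneg _))
          (Ioc_subset_Ioc_right hx.2).eventuallyLE

theorem norm_fst_sub_le {B : ℝ} (hp : LocallyIntegrable (fun t => 1 / extK T p t))
    (hu : IsPair T μ p u u1 h) (hcx : c ≤ x) (hB : ∀ t ∈ Ioc c x, ‖u1 t‖ ≤ B) :
    ‖u x - u c‖ ≤ B * ∫ t in c..x, ‖1 / extK T p t‖ := by
  rw [(hu c x hcx).1, add_sub_cancel_left, ← intervalIntegral.integral_const_mul]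
  refine intervalIntegral.norm_integral_le_of_norm_le hcx (ae_of_all _ fun t ht => ?_)
    ((intervalIntegrable_of_locallyIntegrable hp c x).norm.const_mul B)
  rw [div_eq_mul_one_div, norm_mul]
  exact mul_le_mul_of_nonneg_right (hB t ht) (norm_nonneg _)

theorem fst_eq_zero_of_initial_eq_zero [SFinite μ]
    (hp : LocallyIntegrable (fun t => 1 / extK T p t))
    (hh : LocallyIntegrable h μ) (hk : LocallyIntegrable k μ)
    (hu : IsPair T μ p u u1 h) (huk : h =ᵐ[μ] fun t => k t * u t)
    (hua : u a = 0) (hu1a : u1 a = 0) (hax : a ≤ x) : u x = 0 := by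
  have hpi : ∀ c d, IntervalIntegrable (fun t => ‖1 / extK T p t‖) volume c d :=
    fun c d => (intervalIntegrable_of_locallyIntegrable hp c d).norm
  let K := ∫ t in Ioc a x, ‖k t‖ ∂μ
  refine eqOn_zero_of_norm_sub_le_mul_sub (G := fun y => K * ∫ t in a..y, ‖1 / extK T p t‖)
    ((hu.continuousOn_fst hp hh a).mono Icc_subset_Ici_self)
    ((intervalIntegral.continuous_primitive hpi a).const_mul K).continuousOn hua ?_ ⟨hax, le_rfl⟩
  intro c hc y hy M hM
  have hM0 : 0 ≤ M := (norm_nonneg _).trans (hM y ⟨hc.1.trans hy.1, le_rfl⟩)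
  have hKy : ∫ t in Ioc a y, ‖k t‖ ∂μ ≤ K :=
    setIntegral_mono_set (integrableOn_Ioc_of_locallyIntegrable hk a x).norm
      (ae_of_all _ fun _ => norm_nonneg _) (Ioc_subset_Ioc_right hy.2).eventuallyLE
  have hu1 : ∀ t ∈ Ioc c y, ‖u1 t‖ ≤ M * K := fun t ht =>
    (hu.norm_snd_le_mul_of_norm_fst_le hk huk hu1a hM ⟨hc.1.trans ht.1.le, ht.2⟩).trans
      (mul_le_mul_of_nonneg_left hKy hM0)
  calc ‖u y - u c‖ ≤ M * K * ∫ t in c..y, ‖1 / extK T p t‖ := hu.norm_fst_sub_le hp hy.1 hu1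
    _ = M * (K * (∫ t in a..y, ‖1 / extK T p t‖) - K * ∫ t in a..c, ‖1 / extK T p t‖) := by
      rw [← intervalIntegral.integral_interval_sub_left (hpi a y) (hpi a c)]; ring

end IsPair

theorem exists_ne_zero_of_Wr_eq_zero (hW : Wr u u1 v v1 x = 0) :
    ∃ s t : ℂ, (s, t) ≠ 0 ∧ s * u x + t * v x = 0 ∧ s * u1 x + t * v1 x = 0 := by
  have hdet : (!![u x, u1 x; v x, v1 x]).det = 0 := by rw [Matrix.det_fin_two_of]; exact hW
  obtain ⟨y, hy, hyM⟩ := Matrix.exists_vecMul_eq_zero_iff.2 hdet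
  refine ⟨y 0, y 1, fun h0 => hy ?_, ?_, ?_⟩
  · ext i
    fin_cases i
    · exact congrArg Prod.fst h0
    · exact congrArg Prod.snd h0
  · simpa [Matrix.vecMul, dotProduct, Fin.sum_univ_two] using congrFun hyM 0
  · simpa [Matrix.vecMul, dotProduct, Fin.sum_univ_two] using congrFun hyM 1

theorem Wr_eq_zero_of_boundary_condition {c s : ℂ} (hcs : (c, s) ≠ 0)
    (hu : u x * c - u1 x * s = 0) (hv : v x * c - v1 x * s = 0) : Wr u u1 v v1 x = 0 := by
  have hc : c * Wr u u1 v v1 x = 0 := by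
    unfold Wr; linear_combination v1 x * hu - u1 x * hv
  have hs : s * Wr u u1 v v1 x = 0 := by
    unfold Wr; linear_combination v x * hu - u x * hv
  by_contra hW
  exact hcs (Prod.ext ((mul_eq_zero.1 hc).resolve_right hW) ((mul_eq_zero.1 hs).resolve_right hW))

theorem IsPair.exists_linear_combination_eq_zero_of_Wr_eq_zero [SFinite μ]
    (hp : LocallyIntegrable (fun t => 1 / extK T p t)) (hk : LocallyIntegrable k μ)
    (hh : LocallyIntegrable h μ) (hu : IsPair T μ p u u1 h) (huk : h =ᵐ[μ] fun t => k t * u t)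
    (hg : LocallyIntegrable g μ) (hv : IsPair T μ p v v1 g) (hvk : g =ᵐ[μ] fun t => k t * v t)
    (hW : Wr u u1 v v1 a = 0) :
    ∃ s t : ℂ, (s, t) ≠ 0 ∧ ∀ x, a ≤ x → s * u x + t * v x = 0 := by
  obtain ⟨s, t, hst, hfst, hsnd⟩ := exists_ne_zero_of_Wr_eq_zero hW
  have hsh : LocallyIntegrable (fun y => s * h y) μ := hh.smul s
  have htg : LocallyIntegrable (fun y => t * g y) μ := hg.smul t
  have hsol : (fun y => s * h y + t * g y) =ᵐ[μ] fun y => k y * (s * u y + t * v y) := by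
    filter_upwards [huk, hvk] with y hy hy'
    rw [hy, hy']; ring
  have hw : IsPair T μ p (fun y => s * u y + t * v y) (fun y => s * u1 y + t * v1 y)
      (fun y => s * h y + t * g y) := (hu.const_mul s).add hp hsh htg (hv.const_mul t)
  have hloc : LocallyIntegrable (fun y => s * h y + t * g y) μ := hsh.add htg
  refine ⟨s, t, hst, fun x hax => ?_⟩
  exact IsPair.fst_eq_zero_of_initial_eq_zero (u := fun y => s * u y + t * v y) hp hloc hk hw hsol
    hfst hsnd hax

end Solutions

section TimeScale

variable {T : Set ℝ} {μ ν : Measure ℝ}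

theorem tsKappa_eq (hbb : BddBelow T) : tsKappa T = T ∩ Ici (tsSigma T (sInf T)) := by
  unfold tsKappa
  split_ifs with h
  · ext s
    refine ⟨fun hs => ⟨hs.1, ?_⟩, fun hs => ⟨hs.1, fun hsa => ?_⟩⟩
    · have hlt : sInf T < s := lt_of_le_of_ne' (csInf_le hbb hs.1) hs.2
      rw [mem_Ici, tsSigma, if_pos ⟨s, hs.1, hlt⟩]
      exact csInf_le (hbb.mono fun _ hx => hx.1) ⟨hs.1, hlt⟩
    · exact absurd (h.2.trans_le hs.2) (mem_singleton_iff.1 hsa).not_gt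
  · have hle : tsSigma T (sInf T) ≤ sInf T := not_lt.1 fun hlt => h ⟨hbb, hlt⟩
    exact (inter_eq_left.2 fun s hs => hle.trans (csInf_le hbb hs)).symm

theorem isClosed_tsKappa (hcl : IsClosed T) (hbb : BddBelow T) : IsClosed (tsKappa T) := by
  rw [tsKappa_eq hbb]
  exact hcl.inter isClosed_Ici

theorem mem_tsKappa_iff_of_sInf_lt {s : ℝ} (hs : sInf T < s) : s ∈ tsKappa T ↔ s ∈ T := by
  unfold tsKappa
  split_ifs
  · exact ⟨fun h => h.1, fun h => ⟨h, hs.ne'⟩⟩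
  · rfl

theorem ae_mem_of_measure_Ioc_eq_tsSigma (hcl : IsClosed T)
    (hμ : ∀ c d : ℝ, c ≤ d → μ (Ioc c d) = ENNReal.ofReal (tsSigma T d - tsSigma T c)) :
    ∀ᵐ t ∂μ, t ∈ T := by
  refine measure_null_of_locally_null _ fun t ht => ?_
  obtain ⟨c, d, ⟨hct, htd⟩, hsub⟩ := mem_nhds_iff_exists_Ioo_subset.1 (hcl.isOpen_compl.mem_nhds ht)
  obtain ⟨e, hte, hed⟩ := exists_between htd
  refine ⟨Ioc c e, mem_nhdsWithin_of_mem_nhds (Ioc_mem_nhds hct hte), ?_⟩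
  have hgap : {s | s ∈ T ∧ c < s} = {s | s ∈ T ∧ e < s} := by
    ext s
    exact and_congr_right fun hs => ⟨fun hcs => not_le.1 fun hse =>
      hsub ⟨hcs, hse.trans_lt hed⟩ hs, (hct.trans hte).trans⟩
  rw [hμ c e (hct.trans hte).le]
  simp only [tsSigma, hgap, sub_self, ENNReal.ofReal_zero]

theorem isLocallyFiniteMeasure_of_measure_Ioc_ne_top
    (hμ : ∀ c d : ℝ, c ≤ d → μ (Ioc c d) ≠ ∞) : IsLocallyFiniteMeasure μ :=
  ⟨fun x => ⟨Ioc (x - 1) (x + 1), Ioc_mem_nhds (by linarith) (by linarith),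
    (hμ _ _ (by linarith)).lt_top⟩⟩

/-- The first point of `T` at or after `t`; it is `sInf ∅ = 0` if there is none. Off `𝕋` it agrees
with the forward shift, and on `𝕋` it is the identity, so that `p̄ = p ∘ tsCeil T` on `tsSpan T`. -/
noncomputable def tsCeil (T : Set ℝ) (t : ℝ) : ℝ := sInf (T ∩ Ici t)

/-- The points after the left endpoint `a` that do not lie beyond all of `T`: the interval `(a, b]`
if `T` has a maximum `b`, and `(a, ∞)` if `T` is unbounded above. -/
def tsSpan (T : Set ℝ) : Set ℝ := {t | sInf T < t ∧ (T ∩ Ici t).Nonempty}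

theorem ordConnected_tsSpan : (tsSpan T).OrdConnected :=
  ⟨fun _ hx _ hy _ hz =>
    ⟨hx.1.trans_le hz.1, hy.2.mono (inter_subset_inter_right _ (Ici_subset_Ici.2 hz.2))⟩⟩

theorem measurableSet_tsSpan : MeasurableSet (tsSpan T) := ordConnected_tsSpan.measurableSet

theorem tsCeil_le {s t : ℝ} (hs : s ∈ T) (hts : t ≤ s) : tsCeil T t ≤ s :=
  csInf_le ⟨t, fun _ hx => hx.2⟩ ⟨hs, hts⟩

theorem le_tsCeil {t : ℝ} (ht : (T ∩ Ici t).Nonempty) : t ≤ tsCeil T t :=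
  le_csInf ht fun _ hx => hx.2

theorem tsCeil_of_mem {t : ℝ} (ht : t ∈ T) : tsCeil T t = t :=
  le_antisymm (tsCeil_le ht le_rfl) (le_tsCeil ⟨t, ht, self_mem_Ici⟩)

theorem monotoneOn_tsCeil : MonotoneOn (tsCeil T) (tsSpan T) := fun _ _ _ hy hxy =>
  csInf_le_csInf (bddBelow_Ici.mono inter_subset_right) hy.2
    (inter_subset_inter_right _ (Ici_subset_Ici.2 hxy))

theorem aemeasurable_tsCeil : AEMeasurable (tsCeil T) (volume.restrict (tsSpan T)) :=
  aemeasurable_restrict_of_monotoneOn measurableSet_tsSpan monotoneOn_tsCeil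

theorem le_tsCeil_of_tsRho_lt {c t : ℝ} (ht : (T ∩ Ici t).Nonempty) (hct : tsRho T c < t) :
    c ≤ tsCeil T t := by
  refine le_csInf ht fun s hs => not_lt.1 fun hsc => ?_
  have hbdd : BddAbove {s | s ∈ T ∧ s < c} := ⟨c, fun _ hx => hx.2.le⟩
  rw [tsRho, if_pos ⟨s, hs.1, hsc⟩] at hct
  exact absurd (le_csSup hbdd ⟨hs.1, hsc⟩) (hct.trans_le hs.2).not_ge

theorem exists_mem_lt_of_lt_tsRho {c t : ℝ} (hat : sInf T < t) (htc : t < tsRho T c) :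
    ∃ s ∈ T, t < s ∧ s < c := by
  unfold tsRho at htc
  split_ifs at htc with hne
  · obtain ⟨s, hs, hts⟩ := exists_lt_of_lt_csSup hne htc
    exact ⟨s, hs.1, hts, hs.2⟩
  · exact absurd htc hat.not_gt

theorem sInf_le_tsRho (hbb : BddBelow T) (c : ℝ) : sInf T ≤ tsRho T c := by
  unfold tsRho
  split_ifs with hne
  · obtain ⟨s, hs⟩ := hne
    exact (csInf_le hbb hs.1).trans (le_csSup ⟨c, fun _ hx => hx.2.le⟩ hs)
  · exact le_rfl

theorem volume_tsCeil_preimage_Ico (hbb : BddBelow T) (c d : ℝ) :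
    volume (tsCeil T ⁻¹' Ico c d ∩ tsSpan T) = ENNReal.ofReal (tsRho T d - tsRho T c) := by
  apply le_antisymm
  · rw [← Real.volume_Icc]
    refine measure_mono fun t ⟨⟨hct, htd⟩, hat, hne⟩ =>
      ⟨not_lt.1 fun htc => ?_, not_lt.1 fun hdt => ?_⟩
    · obtain ⟨s, hs, hts, hsc⟩ := exists_mem_lt_of_lt_tsRho hat htc
      exact absurd hct ((tsCeil_le hs hts.le).trans_lt hsc).not_ge
    · exact absurd htd (le_tsCeil_of_tsRho_lt hne hdt).not_gt
  · rw [← Real.volume_Ioo]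
    refine measure_mono fun t ⟨hct, htd⟩ => ?_
    have hat : sInf T < t := (sInf_le_tsRho hbb c).trans_lt hct
    obtain ⟨s, hs, hts, hsd⟩ := exists_mem_lt_of_lt_tsRho hat htd
    have hne : (T ∩ Ici t).Nonempty := ⟨s, hs, hts.le⟩
    exact ⟨⟨le_tsCeil_of_tsRho_lt hne hct, (tsCeil_le hs hts.le).trans_lt hsd⟩, hat, hne⟩

theorem map_tsCeil_volume (hbb : BddBelow T)
    (hν : ∀ c d : ℝ, c ≤ d → ν (Ico c d) = ENNReal.ofReal (tsRho T d - tsRho T c)) :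
    (volume.restrict (tsSpan T)).map (tsCeil T) = ν := by
  have hIco : ∀ c d : ℝ, c ≤ d → (volume.restrict (tsSpan T)).map (tsCeil T) (Ico c d) =
      ENNReal.ofReal (tsRho T d - tsRho T c) := fun c d _ => by
    rw [Measure.map_apply_of_aemeasurable aemeasurable_tsCeil measurableSet_Ico,
      Measure.restrict_apply' measurableSet_tsSpan, volume_tsCeil_preimage_Ico hbb]
  refine Measure.ext_of_Ico' _ _ (fun c d hcd => ?_) fun c d hcd => ?_
  · rw [hIco c d hcd.le]
    exact ENNReal.ofReal_ne_top
  · rw [hIco c d hcd.le, hν c d hcd.le]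

theorem tsSigma_tsKappa_eq_tsCeil {t : ℝ} (ht : t ∈ tsSpan T) (htT : t ∉ T) :
    tsSigma (tsKappa T) t = tsCeil T t := by
  have hset : {s | s ∈ tsKappa T ∧ t < s} = T ∩ Ici t := by
    ext s
    refine ⟨fun hs => ⟨(mem_tsKappa_iff_of_sInf_lt (ht.1.trans hs.2)).1 hs.1, hs.2.le⟩,
      fun hs => ?_⟩
    have hts : t < s := lt_of_le_of_ne hs.2 fun h => htT (h ▸ hs.1)
    exact ⟨(mem_tsKappa_iff_of_sInf_lt (ht.1.trans hts)).2 hs.1, hts⟩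
  rw [tsSigma, hset, if_pos ht.2, tsCeil]

theorem extK_eq_apply_tsCeil (p : ℝ → ℂ) {t : ℝ} (ht : t ∈ tsSpan T) :
    extK T p t = p (tsCeil T t) := by
  rw [extK, mem_tsKappa_iff_of_sInf_lt ht.1]
  split_ifs with htT
  · rw [tsCeil_of_mem htT]
  · rw [tsSigma_tsKappa_eq_tsCeil ht htT]

theorem extK_eq_of_lt_sInf (p : ℝ → ℂ) (hbb : BddBelow T) {t : ℝ} (ht : t < sInf T) :
    extK T p t = p (tsSigma (tsKappa T) (sInf T - 1)) := by
  have hlt : ∀ s ∈ tsKappa T, sInf T ≤ s := fun s hs =>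
    csInf_le hbb ((tsKappa_eq hbb ▸ hs : s ∈ T ∩ _).1)
  have hset : ∀ x < sInf T, {s | s ∈ tsKappa T ∧ x < s} = tsKappa T := fun x hx =>
    Set.ext fun s => ⟨fun hs => hs.1, fun hs => ⟨hs, hx.trans_le (hlt s hs)⟩⟩
  rw [extK, if_neg fun h => (hlt t h).not_gt ht, tsSigma, tsSigma, hset t ht,
    hset _ (sub_one_lt _)]

theorem extK_eq_of_inter_Ici_eq_empty (p : ℝ → ℂ) (hbb : BddBelow T) {t : ℝ}
    (ht : T ∩ Ici t = ∅) : extK T p t = p (sSup (tsKappa T)) := by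
  have hnot : ∀ s ∈ tsKappa T, ¬t ≤ s := fun s hs hts =>
    (ht ▸ ⟨(tsKappa_eq hbb ▸ hs : s ∈ T ∩ _).1, hts⟩ : s ∈ (∅ : Set ℝ)).elim
  rw [extK, if_neg fun h => hnot t h le_rfl, tsSigma, if_neg]
  rintro ⟨s, hs, hts⟩
  exact hnot s hs hts.le

theorem exists_tsCeil_le (T : Set ℝ) (n : ℝ) :
    ∃ m, ∀ t ≤ n, (T ∩ Ici t).Nonempty → tsCeil T t ≤ m := by
  by_cases hn : (T ∩ Ici n).Nonempty
  · obtain ⟨m, hm, hnm⟩ := hn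
    exact ⟨m, fun t htn _ => tsCeil_le hm (htn.trans hnm)⟩
  · refine ⟨n, fun t _ ⟨s, hs, hts⟩ => (tsCeil_le hs hts).trans (le_of_not_ge fun hns => ?_)⟩
    exact hn ⟨s, hs, hns⟩

theorem integrableOn_comp_tsCeil {E : Type*} [NormedAddCommGroup E] {f : ℝ → E} {K : Set ℝ}
    (hbb : BddBelow T)
    (hν : ∀ c d : ℝ, c ≤ d → ν (Ico c d) = ENNReal.ofReal (tsRho T d - tsRho T c))
    (hf : LocallyIntegrable f ν) (hK : BddAbove K) :
    IntegrableOn (f ∘ tsCeil T) (K ∩ tsSpan T) := by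
  obtain ⟨n, hn⟩ := hK
  obtain ⟨m, hm⟩ := exists_tsCeil_le T n
  have hfm : Integrable f (ν.restrict (Icc (sInf T) m)) := hf.integrableOn_isCompact isCompact_Icc
  rw [← map_tsCeil_volume hbb hν, Measure.restrict_map_of_aemeasurable aemeasurable_tsCeil
    measurableSet_Icc] at hfm
  have hcomp : Integrable (f ∘ tsCeil T)
      ((volume.restrict (tsSpan T)).restrict (tsCeil T ⁻¹' Icc (sInf T) m)) :=
    hfm.comp_aemeasurable aemeasurable_tsCeil.restrict
  rw [Measure.restrict_restrict₀' measurableSet_tsSpan.nullMeasurableSet] at hcomp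
  exact IntegrableOn.mono_set hcomp fun t ht =>
    ⟨⟨ht.2.1.le.trans (le_tsCeil ht.2.2), hm t (hn ht.1) ht.2.2⟩, ht.2⟩

theorem locallyIntegrable_one_div_extK {p : ℝ → ℝ} (hbb : BddBelow T)
    (hν : ∀ c d : ℝ, c ≤ d → ν (Ico c d) = ENNReal.ofReal (tsRho T d - tsRho T c))
    (hp : LocallyIntegrable (fun t => 1 / p t) ν) :
    LocallyIntegrable (fun t => 1 / extK T (cR p) t) := by
  refine locallyIntegrable_iff.2 fun K hK => ?_
  have hconst : ∀ (s : Set ℝ) (z : ℂ), MeasurableSet s → (∀ t ∈ s, extK T (cR p) t = z) →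
      IntegrableOn (fun t => 1 / extK T (cR p) t) (K ∩ s) := fun s z hs hz =>
    (integrableOn_const (C := 1 / z) (measure_inter_lt_top_of_left_ne_top hK.measure_ne_top).ne
      ).congr_fun (fun t ht => by simp only [hz t ht.2]) (hK.measurableSet.inter hs)
  have hleft : IntegrableOn (fun t => 1 / extK T (cR p) t) (K ∩ Iio (sInf T)) :=
    hconst _ _ measurableSet_Iio fun t ht => extK_eq_of_lt_sInf _ hbb ht
  have hinf : IntegrableOn (fun t => 1 / extK T (cR p) t) (K ∩ {sInf T}) :=
    hconst _ _ (measurableSet_singleton _) fun t ht => congrArg _ ht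
  have hright : IntegrableOn (fun t => 1 / extK T (cR p) t) (K ∩ {t | T ∩ Ici t = ∅}) := by
    refine hconst _ _ (IsUpperSet.ordConnected fun x y hxy hx => ?_).measurableSet
      fun t ht => extK_eq_of_inter_Ici_eq_empty _ hbb ht
    exact subset_eq_empty (inter_subset_inter_right _ (Ici_subset_Ici.2 hxy)) hx
  have hspan : IntegrableOn (fun t => 1 / extK T (cR p) t) (K ∩ tsSpan T) := by
    refine IntegrableOn.congr_fun (integrableOn_comp_tsCeil hbb hν hp hK.bddAbove).ofReal
      (fun t ht => ?_) (hK.measurableSet.inter measurableSet_tsSpan)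
    simp only [Function.comp_apply, extK_eq_apply_tsCeil (cR p) ht.2, cR]
    push_cast
    rfl
  refine (((hleft.union hinf).union hspan).union hright).mono_set fun t ht => ?_
  rcases lt_trichotomy t (sInf T) with h | h | h
  · exact .inl (.inl (.inl ⟨ht, h⟩))
  · exact .inl (.inl (.inr ⟨ht, h⟩))
  · rcases (T ∩ Ici t).eq_empty_or_nonempty with he | hne
    · exact .inr ⟨ht, he⟩
    · exact .inl (.inr ⟨ht, h, hne⟩)

end TimeScale

section Eigenvectors

variable {T : Set ℝ} {μ : Measure ℝ} {r q : ℝ → ℝ} {u v h : ℝ → ℂ}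

theorem locallyIntegrable_ofReal {f : ℝ → ℝ} (hf : LocallyIntegrable f μ) :
    LocallyIntegrable (fun t => (f t : ℂ)) μ := fun x =>
  let ⟨U, hU, hfU⟩ := hf x
  ⟨U, hU, hfU.ofReal⟩

theorem ae_wM_iff (hmem : ∀ᵐ t ∂μ, t ∈ tsKappa T) (hr : AEMeasurable r μ)
    (hrpos : ∀ᵐ t ∂μ, 0 < r t) {P : ℝ → Prop} :
    (∀ᵐ t ∂wM T μ r, P t) ↔ ∀ᵐ t ∂μ, P t := by
  rw [wM, Measure.restrict_eq_self_of_ae_mem hmem, ae_withDensity_iff' hr.ennreal_ofReal]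
  refine eventually_congr (hrpos.mono fun t ht => ?_)
  simp only [ne_eq, ENNReal.ofReal_eq_zero, not_le, ht, true_imp_iff]

theorem density_ae_eq_of_eigenvector {z : ℂ} (hmem : ∀ᵐ t ∂μ, t ∈ tsKappa T)
    (hr : AEMeasurable r μ) (hrpos : ∀ᵐ t ∂μ, 0 < r t) {F : Lp ℂ 2 (wM T μ r)}
    (hFu : ∀ᵐ t ∂wM T μ r, F t = u t)
    (hFe : ∀ᵐ t ∂wM T μ r, (z • F : Lp ℂ 2 (wM T μ r)) t = ellApply r q h u t) :
    h =ᵐ[μ] fun t => ((q t : ℂ) - z * r t) * u t := by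
  have hell : ∀ᵐ t ∂μ, z * u t = ellApply r q h u t := by
    rw [← ae_wM_iff hmem hr hrpos]
    filter_upwards [hFu, hFe, Lp.coeFn_smul z F] with t htu hte hts
    rw [← hte, hts, Pi.smul_apply, smul_eq_mul, htu]
  filter_upwards [hell, hrpos] with t ht hrt
  have hrt' : (r t : ℂ) ≠ 0 := Complex.ofReal_ne_zero.2 hrt.ne'
  rw [ellApply, eq_div_iff hrt'] at ht
  linear_combination ht

theorem smul_add_smul_eq_zero_of_forall_mem_tsKappa {F G : Lp ℂ 2 (wM T μ r)} {s t : ℂ}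
    (hmem : ∀ᵐ x ∂μ, x ∈ tsKappa T)
    (hFu : ∀ᵐ x ∂wM T μ r, F x = u x) (hGv : ∀ᵐ x ∂wM T μ r, G x = v x)
    (hzero : ∀ x ∈ tsKappa T, s * u x + t * v x = 0) : s • F + t • G = 0 := by
  have hmem' : ∀ᵐ x ∂wM T μ r, x ∈ tsKappa T :=
    (withDensity_absolutelyContinuous _ _).ae_le (ae_restrict_of_ae hmem)
  rw [Lp.eq_zero_iff_ae_eq_zero]
  filter_upwards [Lp.coeFn_add (s • F) (t • G), Lp.coeFn_smul s F, Lp.coeFn_smul t G,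
    hFu, hGv, hmem'] with x hadd hsF htG hF hG hx
  rw [hadd, Pi.add_apply, hsF, htG, Pi.smul_apply, Pi.smul_apply, hF, hG, smul_eq_mul,
    smul_eq_mul, hzero x hx, Pi.zero_apply]

end Eigenvectors

theorem ofReal_cos_ofReal_sin_ne_zero (φ : ℝ) :
    ((Real.cos φ : ℂ), (Real.sin φ : ℂ)) ≠ 0 := fun h => by
  have hcos : Real.cos φ = 0 := Complex.ofReal_eq_zero.1 (congrArg Prod.fst h)
  have hsin : Real.sin φ = 0 := Complex.ofReal_eq_zero.1 (congrArg Prod.snd h)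
  have hone := Real.cos_sq_add_sin_sq φ
  norm_num [hcos, hsin] at hone

theorem eigenvalues_simple_separated_general
    (T : Set ℝ) (_hne : T.Nonempty) (hcl : IsClosed T) (hbb : BddBelow T) (μ ν : Measure ℝ)
    (hμ : ∀ c d : ℝ, c ≤ d →
      μ (Ioc c d) = ENNReal.ofReal (tsSigma (tsKappa T) d - tsSigma (tsKappa T) c))
    (hν : ∀ c d : ℝ, c ≤ d → ν (Ico c d) = ENNReal.ofReal (tsRho T d - tsRho T c))
    (p r q : ℝ → ℝ)
    (hr : LocallyIntegrable r (μ.restrict (tsKappa T))) (hrpos : ∀ᵐ t ∂μ, 0 < r t)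
    (hq : LocallyIntegrable q (μ.restrict (tsKappa T)))
    (_hpne : ∀ᵐ t ∂ν, p t ≠ 0) (hp : LocallyIntegrable (fun t => 1 / p t) ν)
    (c s : ℂ) (hcs : (c, s) ≠ 0)
    (S : Lp ℂ 2 (wM T μ r) →ₗ.[ℂ] Lp ℂ 2 (wM T μ r))
    (hS : ∀ F G : Lp ℂ 2 (wM T μ r), (F, G) ∈ S.graph →
      ∃ u u1 h : ℝ → ℂ, MemD2 T μ p r q u u1 h ∧
        (∀ᵐ t ∂(wM T μ r), F t = u t) ∧
        (∀ᵐ t ∂(wM T μ r), G t = ellApply r q h u t) ∧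
        u (tsSigma T (sInf T)) * c - u1 (tsSigma T (sInf T)) * s = 0)
    (z : ℂ) (F G : Lp ℂ 2 (wM T μ r))
    (hF : (F, z • F) ∈ S.graph) (hG : (G, z • G) ∈ S.graph) :
    ¬ LinearIndependent ℂ ![F, G] := by
  intro hFG
  obtain ⟨u, u1, h, ⟨hh, hu, -⟩, hFu, hFe, hua⟩ := hS _ _ hF
  obtain ⟨v, v1, g, ⟨hg, hv, -⟩, hGv, hGe, hva⟩ := hS _ _ hG
  have : IsLocallyFiniteMeasure μ := isLocallyFiniteMeasure_of_measure_Ioc_ne_top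
    fun c d hcd => (hμ c d hcd).trans_ne ENNReal.ofReal_ne_top
  have hmem : ∀ᵐ t ∂μ, t ∈ tsKappa T :=
    ae_mem_of_measure_Ioc_eq_tsSigma (isClosed_tsKappa hcl hbb) hμ
  rw [Measure.restrict_eq_self_of_ae_mem hmem] at hr hq
  have hrm : AEMeasurable r μ := hr.aestronglyMeasurable.aemeasurable
  have hk : LocallyIntegrable (fun t => (q t : ℂ) - z * r t) μ :=
    (locallyIntegrable_ofReal hq).sub ((locallyIntegrable_ofReal hr).smul z)
  obtain ⟨σ, τ, hστ, hzero⟩ := hu.exists_linear_combination_eq_zero_of_Wr_eq_zero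
    (locallyIntegrable_one_div_extK hbb hν hp) hk
    hh (density_ae_eq_of_eigenvector hmem hrm hrpos hFu hFe)
    hg hv (density_ae_eq_of_eigenvector hmem hrm hrpos hGv hGe)
    (Wr_eq_zero_of_boundary_condition hcs hua hva)
  have hFG0 : σ • F + τ • G = 0 :=
    smul_add_smul_eq_zero_of_forall_mem_tsKappa hmem hFu hGv fun x hx =>
      hzero x (tsKappa_eq hbb ▸ hx : x ∈ T ∩ _).2
  obtain ⟨rfl, rfl⟩ := LinearIndependent.pair_iff.1 hFG σ τ hFG0
  exact hστ rfl

/-- All eigenvalues of the self-adjoint operator with separated boundary conditions on a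
bounded time scale are simple: any two eigenvectors for the same eigenvalue `λ ∈ ℝ` are
linearly dependent, i.e. each eigenspace has dimension at most one. -/
theorem eigenvalues_simple_separated
    (T : Set ℝ) (hne : T.Nonempty) (hcl : IsClosed T)
    (hbb : BddBelow T) (hba : BddAbove T)
    (hfive : ∃ s : Finset ℝ, ↑s ⊆ T ∧ 5 ≤ s.card)
    (μ ν : Measure ℝ)
    (hμ : ∀ c d : ℝ, c ≤ d →
      μ (Set.Ioc c d) = ENNReal.ofReal (tsSigma (tsKappa T) d - tsSigma (tsKappa T) c))
    (hν : ∀ c d : ℝ, c ≤ d → ν (Set.Ico c d) = ENNReal.ofReal (tsRho T d - tsRho T c))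
    (p r q : ℝ → ℝ)
    (hr : Integrable r (μ.restrict (tsKappa T))) (hrpos : ∀ᵐ t ∂μ, 0 < r t)
    (hq : Integrable q (μ.restrict (tsKappa T)))
    (hpne : ∀ᵐ t ∂ν, p t ≠ 0) (hp : Integrable (fun t => 1 / p t) ν)
    (φα φβ : ℝ) (hφα : 0 ≤ φα ∧ φα < Real.pi) (hφβ : 0 ≤ φβ ∧ φβ < Real.pi)
    (hα : tsSigma T (sInf T) < tsSigma T (tsSigma T (sInf T)) → φα ≠ 0)
    (hβ : tsRho T (sSup T) < tsSigma T (tsRho T (sSup T)) →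
      p (sSup T) * Real.sin φβ ≠ (sSup T - tsRho T (sSup T)) * Real.cos φβ)
    (S : Lp ℂ 2 (wM T μ r) →ₗ.[ℂ] Lp ℂ 2 (wM T μ r))
    (hSsa : IsSelfAdjoint S)
    (hSgraph : ∀ F G : Lp ℂ 2 (wM T μ r), (F, G) ∈ S.graph ↔
      ∃ u u1 h : ℝ → ℂ, MemD2 T μ p r q u u1 h ∧
        (∀ᵐ t ∂(wM T μ r), F t = u t) ∧
        (∀ᵐ t ∂(wM T μ r), G t = ellApply r q h u t) ∧
        u (tsSigma T (sInf T)) * (Real.cos φα : ℂ) -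
          u1 (tsSigma T (sInf T)) * (Real.sin φα : ℂ) = 0 ∧
        u (sSup T) * (Real.cos φβ : ℂ) - u1 (sSup T) * (Real.sin φβ : ℂ) = 0)
    :
    ∀ lam : ℝ, ∀ F G : Lp ℂ 2 (wM T μ r),
      (F, (lam : ℂ) • F) ∈ S.graph → (G, (lam : ℂ) • G) ∈ S.graph →
      ¬ LinearIndependent ℂ ![F, G] := by
  exact fun lam => eigenvalues_simple_separated_general T hne hcl hbb μ ν hμ hν p r q
    hr.locallyIntegrable hrpos hq.locallyIntegrable hpne hp.locallyIntegrable _ _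
    (ofReal_cos_ofReal_sin_ne_zero φα) S
    (fun F G hFG => by
      obtain ⟨u, u1, h, hu, hF, hG, hleft, -⟩ := (hSgraph F G).1 hFG
      exact ⟨u, u1, h, hu, hF, hG, hleft⟩) lam
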